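/- Let s ≥ 1 and j ≥ 1 be integers. Let Y = ∏_{ℓ=1}^s S^(j·2^(ℓ−1)) be the product of unit spheres S(V_ℓ) where V_ℓ is a real vector space of dimension j·2^(ℓ−1)+1, with the group G = (ℤ/2)^s acting so that the ℓ-th generator ω_ℓ acts on (p₁,…,p_s) ∈ Y by sending p_ℓ to −p_ℓ and fixing the other coordinates. Let U_s = {(y_α)_{α ∈ (ℤ/2)^s} ∈ ℝ^((ℤ/2)^s) : ∑_α y_α = 0}, with G acting by β·(y_α)_α = (y_{β+α})_α, and give U_s^{⊕j} the diagonal G-action. Then every continuous G-equivariant map Φ : Y → U_s^{⊕j} has a zero, i.e., there exists y ∈ Y with Φ(y) = 0. -/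

import Mathlib

/-- The product `Y = ∏_{ℓ=1}^s S^{j·2^{ℓ−1}}` of unit spheres, where the `ℓ`-th factor is the
unit sphere of a real inner product space of dimension `j·2^{ℓ−1} + 1` (indexed here by
`ℓ ∈ Fin s`, so the `ℓ`-th sphere sits in `ℝ^{j·2^ℓ + 1}` for the 0-based index `ℓ`). -/
abbrev SphereProd (s j : ℕ) : Type :=
  {y : ∀ ℓ : Fin s, EuclideanSpace ℝ (Fin (j * 2 ^ (ℓ : ℕ) + 1)) // ∀ ℓ, ‖y ℓ‖ = 1}

/-!
The Walsh transform splits `U_s^{⊕j}` into `j` copies of each nontrivial character `χ` of `(ℤ/2)ˢ`,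
so `Φ` amounts to a family of real functions, one for each of these copies, that pick up the sign
`(-1)^(χ ⬝ᵥ g)` under the action of `g`. In the product of the real projective spaces of dimensions
`n ℓ = j * 2 ^ ℓ`, the zero set of such a function is dual to the linear form `∑ ℓ, χ ℓ • X ℓ`. The
functions have a common zero because the product of the linear forms contains the monomial
`∏ ℓ, X ℓ ^ n ℓ`: exactly `n ℓ` of the forms have `X ℓ` as their last variable, so the monomial
arises in a single way.

The intersection theory is done with cubical chains modulo 2 on a product of boundaries of cubes.
Cutting the fundamental cycle by the signs of all the functions gives an invariant cycle. Its class,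
modulo boundaries of invariant chains, depends only on the characters. When hemispheres take the
place of the signs, the result is the orbit of one vertex. This is not the boundary of an invariant
chain: such a chain consists of the translates of its part in a fundamental domain, and the boundary
of that part has an even number of vertices. Hence the cut cycle is never zero, and near each of its
cells all the functions change sign. Refining the cubes gives a common zero by compactness.
-/

open Function Finset
open scoped Matrix

theorem exists_last_ne_zero {ι R : Type*} [LinearOrder ι] [Finite ι] [Zero R] {c : ι → R}
    (hc : c ≠ 0) : ∃ r, c r ≠ 0 ∧ ∀ k, r < k → c k = 0 := by
  obtain ⟨r, hr, hmax⟩ := WellFounded.has_min (wellFounded_gt (α := ι)) {k | c k ≠ 0}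
    (Function.ne_iff.1 hc)
  exact ⟨r, hr, fun k hk => by_contra fun hck => hmax k hck hk⟩

section WalshTransform

/-- The character `a ↦ (-1)^a` of `ℤ/2`. -/
noncomputable def signChar : AddChar (ZMod 2) ℝ :=
  AddChar.zmodChar 2 (neg_one_sq : (-1 : ℝ) ^ 2 = 1)

theorem signChar_one : signChar 1 = -1 := by
  simp [signChar, AddChar.zmodChar_apply, ZMod.val_one]

variable {κ : Type*} [Fintype κ] [DecidableEq κ]

theorem sum_signChar_dotProduct_eq_zero {γ : κ → ZMod 2} (hγ : γ ≠ 0) :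
    ∑ χ, signChar (χ ⬝ᵥ γ) = 0 := by
  let character : AddChar (κ → ZMod 2) ℝ :=
    signChar.compAddMonoidHom ⟨⟨fun χ => χ ⬝ᵥ γ, zero_dotProduct γ⟩, fun χ χ' =>
      add_dotProduct χ χ' γ⟩
  obtain ⟨ℓ, hℓ⟩ := Function.ne_iff.1 hγ
  have hγℓ : γ ℓ = 1 := Fin.eq_one_of_ne_zero _ hℓ
  have hsingle : character (Pi.single ℓ 1) = -1 := by
    simp [character, hγℓ, signChar_one]
  refine AddChar.sum_eq_zero_of_ne_one (ψ := character) fun htrivial => ?_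
  norm_num [htrivial] at hsingle

/-- The Walsh transform, that is, the Fourier transform on `(ℤ/2)^κ`. -/
noncomputable def walsh (φ : (κ → ZMod 2) → ℝ) (χ : κ → ZMod 2) : ℝ :=
  ∑ α, signChar (χ ⬝ᵥ α) * φ α

variable {φ : (κ → ZMod 2) → ℝ}

theorem walsh_zero : walsh φ 0 = ∑ α, φ α := by
  simp [walsh]

theorem continuous_walsh {Y : Type*} [TopologicalSpace Y] {Φ : Y → (κ → ZMod 2) → ℝ}
    (hΦ : Continuous Φ) (χ : κ → ZMod 2) : Continuous fun y => walsh (Φ y) χ := by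
  unfold walsh
  fun_prop

theorem walsh_translate (g χ : κ → ZMod 2) :
    walsh (fun α => φ (g + α)) χ = signChar (χ ⬝ᵥ g) * walsh φ χ := by
  have hterm (α : κ → ZMod 2) : signChar (χ ⬝ᵥ α) * φ (g + α) =
      signChar (χ ⬝ᵥ g) * (signChar (χ ⬝ᵥ (g + α)) * φ (g + α)) := by
    rw [← mul_assoc, ← AddChar.map_add_eq_mul, ← dotProduct_add, ← add_assoc,
      ZModModule.add_self, zero_add]
  simp only [walsh, hterm, ← Finset.mul_sum]
  exact congrArg _ (Equiv.sum_comp (Equiv.addLeft g) fun α => signChar (χ ⬝ᵥ α) * φ α)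

theorem sum_signChar_mul_walsh (β : κ → ZMod 2) :
    ∑ χ, signChar (χ ⬝ᵥ β) * walsh φ χ = Fintype.card (κ → ZMod 2) * φ β := by
  simp only [walsh, Finset.mul_sum]
  rw [Finset.sum_comm]
  simp only [← mul_assoc, ← AddChar.map_add_eq_mul, ← dotProduct_add, ← Finset.sum_mul]
  rw [Finset.sum_eq_single β]
  · simp [ZModModule.add_self]
  · intro α _ hα
    rw [sum_signChar_dotProduct_eq_zero, zero_mul]
    exact fun h => hα (by rwa [add_eq_zero_iff_neg_eq, ZModModule.neg_eq_self, eq_comm] at h)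
  · simp

theorem eq_zero_of_walsh_eq_zero (h : ∀ χ, walsh φ χ = 0) : φ = 0 := by
  ext β
  have hinversion := sum_signChar_mul_walsh (φ := φ) β
  simpa [h] using hinversion

end WalshTransform

section LinearForms

variable {κ : Type*} [Fintype κ] {s : ℕ}

/-- The linear form with coefficient vector `χ`. -/
noncomputable def linearForm {R : Type*} [CommSemiring R] (χ : κ → R) : MvPolynomial κ R :=
  ∑ ℓ, χ ℓ • MvPolynomial.X ℓ

theorem isHomogeneous_linearForm {R : Type*} [CommSemiring R] (χ : κ → R) :
    (linearForm χ).IsHomogeneous 1 :=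
  MvPolynomial.IsHomogeneous.sum _ _ _ fun ℓ _ => by
    simpa [MvPolynomial.smul_eq_C_mul] using
      (MvPolynomial.isHomogeneous_C κ (χ ℓ)).mul (MvPolynomial.isHomogeneous_X R ℓ)

theorem isHomogeneous_prod_linearForm {R T : Type*} [CommSemiring R] [Fintype T] (χ : T → κ → R) :
    (∏ t, linearForm (χ t)).IsHomogeneous (Fintype.card T) := by
  simpa using MvPolynomial.IsHomogeneous.prod univ _ _ fun t _ => isHomogeneous_linearForm (χ t)

theorem eq_of_le_of_sum_single_eq {T : Type*} [Fintype T] {φ ψ : T → Fin s} (hle : ∀ t, φ t ≤ ψ t)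
    (hsum : ∑ t, Finsupp.single (φ t) 1 = ∑ t, Finsupp.single (ψ t) 1) : φ = ψ := by
  have hweight : ∑ t, (φ t : ℕ) = ∑ t, (ψ t : ℕ) := by
    simpa using congrArg (Finsupp.linearCombination ℕ (Fin.val : Fin s → ℕ)) hsum
  exact funext fun t => Fin.ext ((Finset.sum_eq_sum_iff_of_le (f := fun t => (φ t : ℕ))
    fun t _ => hle t).1 hweight t (Finset.mem_univ t))

theorem coeff_prod_linearForm_eq_one {R T : Type*} [CommSemiring R] [Fintype T]
    {χ : T → Fin s → R} {last : T → Fin s} (hone : ∀ t, χ t (last t) = 1)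
    (hzero : ∀ t ℓ, last t < ℓ → χ t ℓ = 0) :
    (∏ t, linearForm (χ t)).coeff (∑ t, Finsupp.single (last t) 1) = 1 := by
  classical
  have hexpand : ∏ t, linearForm (χ t) = ∑ φ : T → Fin s,
      MvPolynomial.monomial (∑ t, Finsupp.single (φ t) 1) (∏ t, χ t (φ t)) := by
    simp only [linearForm, Finset.prod_univ_sum, Fintype.piFinset_univ, MvPolynomial.X,
      MvPolynomial.smul_eq_C_mul, Finset.prod_mul_distrib, MvPolynomial.monomial_sum_index,
      map_prod]
  rw [hexpand, MvPolynomial.coeff_sum, Finset.sum_eq_single last]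
  · simp [hone]
  · intro φ _ hφ
    rw [MvPolynomial.coeff_monomial, ite_eq_right_iff]
    intro hsum
    obtain ⟨t, ht⟩ : ∃ t, last t < φ t := by
      by_contra! hle
      exact hφ (eq_of_le_of_sum_single_eq hle hsum)
    exact Finset.prod_eq_zero (Finset.mem_univ t) (hzero t _ ht)
  · simp

/-- The characters of `(ℤ/2)^s` whose last nonzero entry has index `ℓ`. -/
def lastNonzeroAt (ℓ : Fin s) : Finset (Fin s → ZMod 2) :=
  {χ | χ ℓ = 1 ∧ ∀ m, ℓ < m → χ m = 0}

theorem mem_lastNonzeroAt {ℓ : Fin s} {χ : Fin s → ZMod 2} :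
    χ ∈ lastNonzeroAt ℓ ↔ χ ℓ = 1 ∧ ∀ m, ℓ < m → χ m = 0 :=
  Finset.mem_filter_univ χ

theorem card_lastNonzeroAt (ℓ : Fin s) : #(lastNonzeroAt ℓ) = 2 ^ (ℓ : ℕ) := by
  have hpi : lastNonzeroAt ℓ = Fintype.piFinset fun m =>
      if m < ℓ then univ else if m = ℓ then {1} else {0} := by
    ext χ
    simp only [mem_lastNonzeroAt, Fintype.mem_piFinset]
    grind
  have hcard (m : Fin s) : #(if m < ℓ then univ else if m = ℓ then {1} else {0} : Finset (ZMod 2)) =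
      if m < ℓ then 2 else 1 := by
    split_ifs <;> simp
  rw [hpi, Fintype.card_piFinset]
  simp only [hcard]
  rw [Finset.prod_ite, Finset.prod_const_one, mul_one, Finset.prod_const, Finset.filter_gt_eq_Iio,
    Fin.card_Iio]

theorem sum_single_sigma_lastNonzeroAt (j : ℕ) :
    ∑ t : Σ ℓ : Fin s, Fin j × lastNonzeroAt ℓ, Finsupp.single t.1 1 =
      Finsupp.equivFunOnFinite.symm fun ℓ : Fin s => j * 2 ^ (ℓ : ℕ) := by
  ext ℓ
  simp [Fintype.sum_sigma, card_lastNonzeroAt, Finsupp.finsetSum_apply, Finsupp.single_apply]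

theorem coeff_prod_linearForm_lastNonzeroAt (j : ℕ) :
    (∏ t : Σ ℓ : Fin s, Fin j × lastNonzeroAt ℓ, linearForm t.2.2.1).coeff
      (Finsupp.equivFunOnFinite.symm fun ℓ : Fin s => j * 2 ^ (ℓ : ℕ)) = 1 := by
  rw [← sum_single_sigma_lastNonzeroAt]
  exact coeff_prod_linearForm_eq_one (fun t => (mem_lastNonzeroAt.1 t.2.2.2).1)
    fun t => (mem_lastNonzeroAt.1 t.2.2.2).2

end LinearForms

/-- Negation of the coordinates in the directions where `g` is nonzero. -/
def signFlip {ι R : Type*} [Neg R] (g : ι → ZMod 2) (x : ι → R) : ι → R :=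
  fun i => if g i = 0 then x i else -x i

theorem abs_signFlip {ι R : Type*} [AddCommGroup R] [LinearOrder R] [IsOrderedAddMonoid R]
    (g : ι → ZMod 2) (x : ι → R) (i : ι) : |signFlip g x i| = |x i| := by
  unfold signFlip
  split_ifs <;> simp

/-- Cubical chains of `ℝ^ι` with coefficients in `ℤ/2`. A point `c` of the lattice stands for the
cell which is a vertex in the directions where `c` is even, and an open edge of length `2` centred
at `c i` in the directions where `c` is odd. Chains need not be finitely supported, and the
pointwise product lets a function on cells act as a cochain. -/
abbrev CubicalChain (ι : Type*) := (ι → ℤ) → ZMod 2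

namespace CubicalChain

/-- The cubical boundary on the line, in the encoding of `CubicalChain`. -/
def lineBoundary (a : ℤ → ZMod 2) (x : ℤ) : ZMod 2 :=
  if Even x then a (x + 1) + a (x - 1) else 0

theorem dependsOn_comp_eval {ι : Type*} (a : ℤ → ZMod 2) (i : ι) :
    DependsOn (fun c : ι → ℤ => a (c i)) {i} :=
  fun _ _ h => congrArg a (h i rfl)

theorem dependsOn_prod {ι κ : Type*} {z : κ → CubicalChain ι} {p : ι → κ}
    (hz : ∀ m, DependsOn (z m) (p ⁻¹' {m})) (s : Finset κ) :
    DependsOn (∏ m ∈ s, z m) (p ⁻¹' s) := by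
  intro c d hcd
  rw [Finset.prod_apply, Finset.prod_apply]
  refine Finset.prod_congr rfl fun m hm => hz m fun i hi => hcd i ?_
  rwa [Set.mem_preimage, Set.mem_singleton_iff.1 hi]

section Boundary

variable {ι : Type*} [DecidableEq ι]

/-- The part of the cubical boundary that collapses the edges in direction `i`. -/
def face (i : ι) : CubicalChain ι →ₗ[ZMod 2] CubicalChain ι where
  toFun z d := if Even (d i) then z (update d i (d i + 1)) + z (update d i (d i - 1)) else 0
  map_add' z w := by ext d; simp only [Pi.add_apply]; split_ifs <;> ring
  map_smul' a z := by ext d; simp [mul_add]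

theorem face_apply (i : ι) (z : CubicalChain ι) (d : ι → ℤ) :
    face i z d =
      if Even (d i) then z (update d i (d i + 1)) + z (update d i (d i - 1)) else 0 :=
  rfl

theorem face_face_self (i : ι) (z : CubicalChain ι) : face i (face i z) = 0 := by
  ext d
  by_cases hd : Even (d i)
  · have hodd : ¬Odd (d i) := Int.not_odd_iff_even.2 hd
    simp [face_apply, parity_simps, hodd]
  · simp [face_apply, hd]

theorem face_face_comm (i j : ι) (z : CubicalChain ι) :
    face i (face j z) = face j (face i z) := by
  rcases eq_or_ne i j with rfl | hij
  · rfl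
  ext d
  by_cases hi : Even (d i) <;> by_cases hj : Even (d j) <;>
    simp only [face_apply, hi, hj, if_true, if_false, update_of_ne hij, update_of_ne hij.symm,
      update_comm hij, add_zero]
  abel

theorem face_eq_zero_of_dependsOn {z : CubicalChain ι} {A : Set ι} (hz : DependsOn z A) {i : ι}
    (hi : i ∉ A) : face i z = 0 := by
  ext d
  have hupdate (x : ℤ) : z (update d i x) = z d :=
    hz fun k hk => update_of_ne (ne_of_mem_of_not_mem hk hi) ..
  simp [face_apply, hupdate, CharTwo.add_self_eq_zero]

theorem face_mul_of_dependsOn (u : CubicalChain ι) {v : CubicalChain ι} {A : Set ι}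
    (hv : DependsOn v A) {i : ι} (hi : i ∉ A) : face i (u * v) = face i u * v := by
  ext d
  have hupdate (x : ℤ) : v (update d i x) = v d :=
    hv fun k hk => update_of_ne (ne_of_mem_of_not_mem hk hi) ..
  simp only [face_apply, Pi.mul_apply, hupdate]
  split_ifs <;> ring

theorem face_two_smul (i : ι) (w : CubicalChain ι) (u : ι → ℤ) :
    face i w (2 • u) =
      w (2 • u + Pi.single i 1) + w (2 • (u - Pi.single i 1) + Pi.single i 1) := by
  have hpos : update (2 • u) i ((2 • u) i + 1) = 2 • u + Pi.single i 1 := by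
    ext k
    rcases eq_or_ne k i with rfl | hk <;> simp [*]
  have hneg : update (2 • u) i ((2 • u) i - 1) =
      2 • (u - Pi.single i 1) + Pi.single i 1 := by
    ext k
    rcases eq_or_ne k i with rfl | hk
    · simp only [update_self, Pi.add_apply, Pi.sub_apply, Pi.smul_apply, Pi.single_eq_same]
      ring
    · simp [hk]
  rw [face_apply, if_pos (by simp), hpos, hneg]

theorem finite_support_edges {w : CubicalChain ι} (hw : (support w).Finite) (i : ι) :
    (support fun u : ι → ℤ => w (2 • u + Pi.single i 1)).Finite :=
  hw.preimage (Injective.injOn fun _ _ huv =>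
    smul_right_injective _ two_ne_zero (add_right_cancel huv))

theorem finite_support_face_vertices {w : CubicalChain ι} (hw : (support w).Finite) (i : ι) :
    (support fun u : ι → ℤ => face i w (2 • u)).Finite := by
  have hedges := finite_support_edges hw i
  simp only [face_two_smul]
  exact (hedges.union (hedges.preimage sub_left_injective.injOn)).subset (support_add _ _)

theorem finsum_face_vertices_eq_zero {w : CubicalChain ι} (hw : (support w).Finite) (i : ι) :
    ∑ᶠ u : ι → ℤ, face i w (2 • u) = 0 := by
  have hedges := finite_support_edges hw i
  simp only [face_two_smul]
  rw [finsum_add_distrib hedges (hedges.preimage sub_left_injective.injOn)]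
  exact CharTwo.add_eq_zero.2
    (finsum_comp_equiv (Equiv.subRight (Pi.single i 1 : ι → ℤ))).symm

variable [Fintype ι]

/-- The cubical boundary operator. -/
def boundary : CubicalChain ι →ₗ[ZMod 2] CubicalChain ι := ∑ i, face i

theorem boundary_eq_sum (z : CubicalChain ι) : boundary z = ∑ i, face i z := by
  simp [boundary]

theorem boundary_boundary (z : CubicalChain ι) : boundary (boundary z) = 0 := by
  simp only [boundary_eq_sum, map_sum, ← Finset.sum_product']
  refine Finset.sum_involution (fun p _ => p.swap) (fun p _ => ?_) (fun p _ hne heq => ?_)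
    (fun _ _ => by simp) (fun _ _ => rfl)
  · rw [Prod.fst_swap, Prod.snd_swap, face_face_comm, ZModModule.add_self]
  · obtain ⟨i, j⟩ := p
    obtain rfl : j = i := congrArg Prod.fst heq
    exact hne (face_face_self j z)

theorem boundary_mul_of_dependsOn {u v : CubicalChain ι} {A B : Set ι} (hu : DependsOn u A)
    (hv : DependsOn v B) (hAB : Disjoint A B) :
    boundary (u * v) = boundary u * v + u * boundary v := by
  simp only [boundary_eq_sum, Finset.sum_mul, Finset.mul_sum, ← Finset.sum_add_distrib]
  refine Finset.sum_congr rfl fun i _ => ?_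
  by_cases hi : i ∈ A
  · have hiB := Set.disjoint_left.1 hAB hi
    rw [face_mul_of_dependsOn u hv hiB, face_eq_zero_of_dependsOn hv hiB, mul_zero, add_zero]
  · rw [mul_comm u v, face_mul_of_dependsOn v hu hi, face_eq_zero_of_dependsOn hu hi, zero_mul,
      zero_add, mul_comm]

theorem boundary_prod_of_dependsOn {κ : Type*} [DecidableEq κ] {z : κ → CubicalChain ι} {p : ι → κ}
    (hz : ∀ m, DependsOn (z m) (p ⁻¹' {m})) (s : Finset κ) :
    boundary (∏ m ∈ s, z m) = ∑ m ∈ s, boundary (z m) * ∏ l ∈ s.erase m, z l := by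
  induction s using Finset.induction_on with
  | empty =>
    have hface (i : ι) : face i (1 : CubicalChain ι) = 0 :=
      face_eq_zero_of_dependsOn (dependsOn_const 1) (Set.notMem_empty i)
    simp [boundary_eq_sum, hface]
  | insert a s ha ih =>
    have hdisj : Disjoint (p ⁻¹' {a}) (p ⁻¹' s) :=
      Disjoint.preimage p (Set.disjoint_singleton_left.2 ha)
    rw [Finset.prod_insert ha, boundary_mul_of_dependsOn (hz a) (dependsOn_prod hz s) hdisj, ih,
      Finset.sum_insert ha, Finset.erase_insert ha, Finset.mul_sum]
    congr 1
    refine Finset.sum_congr rfl fun m hm => ?_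
    have hma : a ≠ m := (ne_of_mem_of_not_mem hm ha).symm
    rw [Finset.erase_insert_of_ne hma, Finset.prod_insert (by simp [ha]), mul_left_comm]

theorem boundary_comp_eval (a : ℤ → ZMod 2) (i : ι) :
    boundary (fun c : ι → ℤ => a (c i)) = fun d => lineBoundary a (d i) := by
  rw [boundary_eq_sum, Finset.sum_eq_single i
    (fun j _ hji => face_eq_zero_of_dependsOn (dependsOn_comp_eval a i) hji) (by simp)]
  ext d
  simp [face_apply, lineBoundary]

theorem boundary_comp_signFlip (g : ι → ZMod 2) (z : CubicalChain ι) :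
    boundary (fun c => z (signFlip g c)) = fun d => boundary z (signFlip g d) := by
  ext d
  simp only [boundary_eq_sum, Finset.sum_apply]
  refine Finset.sum_congr rfl fun i _ => ?_
  have hupdate (x : ℤ) : signFlip g (update d i x) =
      update (signFlip g d) i (if g i = 0 then x else -x) := by
    ext k
    rcases eq_or_ne k i with rfl | hk <;> simp [signFlip, *]
  by_cases hi : g i = 0
  · simp [face_apply, hupdate, signFlip, hi]
  · simp [face_apply, hupdate, signFlip, hi, add_comm, sub_eq_add_neg]

theorem boundary_comp_of_injective {κ : Type*} [Fintype κ] [DecidableEq κ] {e : κ → ι}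
    (he : Injective e) (z : CubicalChain κ) :
    boundary (fun c : ι → ℤ => z (c ∘ e)) = fun d => boundary z (d ∘ e) := by
  ext d
  simp only [boundary_eq_sum, Finset.sum_apply]
  refine (Fintype.sum_of_injective e he _ _ (fun i hi => ?_) fun k => ?_).symm
  · have hdep : DependsOn (fun c : ι → ℤ => z (c ∘ e)) (Set.range e) := fun c c' h =>
      congrArg z (funext fun k => h (e k) ⟨k, rfl⟩)
    rw [face_eq_zero_of_dependsOn hdep hi, Pi.zero_apply]
  · simp [face_apply, update_comp_eq_of_injective _ he]

theorem exists_coface_of_boundary_ne_zero {z : CubicalChain ι} {d : ι → ℤ}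
    (hd : boundary z d ≠ 0) :
    ∃ c, z c ≠ 0 ∧ (∀ j, Even (c j) → d j = c j) ∧ ∀ j, |c j - d j| ≤ 1 := by
  rw [boundary_eq_sum, Finset.sum_apply] at hd
  obtain ⟨i, -, hi⟩ := Finset.exists_ne_zero_of_sum_ne_zero hd
  have hshift (e : ℤ) (he : e = 1 ∨ e = -1) (hdi : Even (d i)) (hz : z (update d i (d i + e)) ≠ 0) :
      ∃ c, z c ≠ 0 ∧ (∀ j, Even (c j) → d j = c j) ∧ ∀ j, |c j - d j| ≤ 1 := by
    refine ⟨_, hz, fun j => ?_, fun j => ?_⟩ <;> rcases eq_or_ne j i with rfl | hj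
    · rcases he with rfl | rfl <;> simp [hdi, parity_simps]
    · simp [hj]
    · rcases he with rfl | rfl <;> simp
    · simp [hj]
  rw [face_apply] at hi
  split_ifs at hi with hdi
  · by_cases hpos : z (update d i (d i + 1)) = 0
    · exact hshift (-1) (Or.inr rfl) hdi fun hneg => hi (by rw [hpos, zero_add]; exact hneg)
    · exact hshift 1 (Or.inl rfl) hdi hpos
  · exact absurd rfl hi

theorem finsum_boundary_vertices_eq_zero {w : CubicalChain ι} (hw : (support w).Finite) :
    ∑ᶠ u : ι → ℤ, boundary w (2 • u) = 0 := by
  simp only [boundary_eq_sum, Finset.sum_apply]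
  rw [finsum_sum_comm _ _ fun i _ => finite_support_face_vertices hw i]
  exact Finset.sum_eq_zero fun i _ => finsum_face_vertices_eq_zero hw i

end Boundary

section Line

/-- The open interval `(-M, M)` of the line, as a chain of edges, for even `M`. -/
def interval (M x : ℤ) : ZMod 2 := if Odd x ∧ |x| < M then 1 else 0

/-- The cochain which is `1` on the cells of the negative half-line. -/
def negative (x : ℤ) : ZMod 2 := if x < 0 then 1 else 0

variable {M : ℤ}

theorem lineBoundary_interval (hM : Even M) (hpos : 0 < M) :
    lineBoundary (interval M) = Pi.single M 1 + Pi.single (-M) 1 := by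
  ext x
  simp only [lineBoundary, interval, Pi.add_apply, Pi.single_apply]
  grind [abs_lt, CharTwo.add_self_eq_zero (R := ZMod 2)]

theorem lineBoundary_negative_mul_interval (hM : Even M) (hpos : 0 < M) :
    lineBoundary (negative * interval M) = Pi.single (-M) 1 + Pi.single 0 1 := by
  ext x
  simp only [lineBoundary, interval, negative, Pi.add_apply, Pi.mul_apply, Pi.single_apply]
  grind [abs_lt, CharTwo.add_self_eq_zero (R := ZMod 2)]

theorem negative_mul_lineBoundary_interval (hM : Even M) (hpos : 0 < M) :
    negative * lineBoundary (interval M) = Pi.single (-M) 1 := by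
  ext x
  simp only [lineBoundary_interval hM hpos, negative, Pi.mul_apply, Pi.add_apply, Pi.single_apply]
  grind

theorem lineBoundary_single {a : ℤ} (ha : Even a) : lineBoundary (Pi.single a 1) = 0 := by
  ext x
  simp only [lineBoundary, Pi.single_apply, Pi.zero_apply]
  grind

end Line

section Hemisphere

variable {ι : Type*} [LinearOrder ι]

open Classical in
/-- The cochain which is `1` on the cells whose last nonzero coordinate is negative. Exactly one of
two antipodal nonzero cells is in this hemisphere. -/
noncomputable def hemisphere : CubicalChain ι :=
  fun c => if ∃ k, c k < 0 ∧ ∀ l, k < l → c l = 0 then 1 else 0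

theorem hemisphere_eq_negative {c : ι → ℤ} {r : ι} (hr : c r ≠ 0)
    (hlast : ∀ l, r < l → c l = 0) : hemisphere c = negative (c r) := by
  have hiff : (∃ k, c k < 0 ∧ ∀ l, k < l → c l = 0) ↔ c r < 0 := by
    refine ⟨fun ⟨k, hk, hkl⟩ => ?_, fun h => ⟨r, h, hlast⟩⟩
    rcases lt_trichotomy k r with h | rfl | h
    · exact absurd (hkl r h) hr
    · exact hk
    · exact absurd (hlast k h) hk.ne
  simp only [hemisphere, negative, hiff]

theorem hemisphere_neg [Finite ι] {c : ι → ℤ} (hc : c ≠ 0) :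
    hemisphere (-c) = hemisphere c + 1 := by
  obtain ⟨r, hr, hlast⟩ := exists_last_ne_zero hc
  rw [hemisphere_eq_negative hr hlast,
    hemisphere_eq_negative (r := r) (by simpa using hr) (by simpa using hlast)]
  simp only [negative, Pi.neg_apply]
  grind

theorem hemisphere_mul_comp_eval_mul {a : ℤ → ZMod 2} (ha : a 0 = 0) {z : CubicalChain ι} {r : ι}
    (hz : ∀ c, z c ≠ 0 → ∀ l, r < l → c l = 0) :
    hemisphere * ((fun c => a (c r)) * z) = (fun c => (negative * a) (c r)) * z := by
  ext c
  by_cases hzc : z c = 0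
  · simp [hzc]
  by_cases hcr : c r = 0
  · simp [hcr, ha]
  · simp [hemisphere_eq_negative hcr (hz c hzc), mul_assoc]

end Hemisphere

section Sphere

/-- The factor in direction `i` of the `k`-dimensional cubical ball `[-M, M]ᵏ × 0` of `ℝᵐ`. -/
def ballFactor {m : ℕ} (M : ℤ) (k : ℕ) (i : Fin m) : ℤ → ZMod 2 :=
  if i < k then interval M else Pi.single 0 1

/-- The fundamental chain of the cubical ball `[-M, M]ᵏ × 0` of `ℝᵐ`, for even `M`. -/
def ball (m : ℕ) (M : ℤ) (k : ℕ) : CubicalChain (Fin m) :=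
  ∏ i : Fin m, fun c => ballFactor M k i (c i)

/-- The boundary of the `k`-dimensional cubical ball. This sphere has dimension `k - 1`, and it is
empty for `k = 0`. -/
def sphere (m : ℕ) (M : ℤ) (k : ℕ) : CubicalChain (Fin m) := boundary (ball m M k)

variable {m k : ℕ} {M : ℤ}

theorem ball_apply (c : Fin m → ℤ) : ball m M k c = ∏ i, ballFactor M k i (c i) := by
  simp [ball]

theorem sphere_apply (d : Fin m → ℤ) : sphere m M k d =
    ∑ i, lineBoundary (ballFactor M k i) (d i) * ∏ l ∈ univ.erase i, ballFactor M k l (d l) := by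
  rw [sphere, ball,
    boundary_prod_of_dependsOn (p := id) fun i => dependsOn_comp_eval (ballFactor M k i) i]
  simp [boundary_comp_eval]

theorem sphere_zero : sphere m M 0 = 0 := by
  ext d
  simp [sphere_apply, ballFactor, lineBoundary_single]

theorem abs_eq_of_lineBoundary_ballFactor_ne_zero (hM : Even M) (hpos : 0 < M) {i : Fin m} {x : ℤ}
    (hx : lineBoundary (ballFactor M k i) x ≠ 0) : |x| = M := by
  unfold ballFactor at hx
  split_ifs at hx
  · rw [lineBoundary_interval hM hpos] at hx
    simp only [Pi.add_apply, Pi.single_apply] at hx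
    grind
  · simp [lineBoundary_single] at hx

theorem abs_le_of_ballFactor_ne_zero (hpos : 0 < M) {i : Fin m} {x : ℤ}
    (hx : ballFactor M k i x ≠ 0) : |x| ≤ M := by
  unfold ballFactor at hx
  split_ifs at hx
  · unfold interval at hx
    grind
  · rw [Pi.single_apply] at hx
    grind

theorem abs_le_and_exists_abs_eq_of_sphere_ne_zero (hM : Even M) (hpos : 0 < M) {d : Fin m → ℤ}
    (hd : sphere m M k d ≠ 0) : (∀ i, |d i| ≤ M) ∧ ∃ i, |d i| = M := by
  rw [sphere_apply] at hd
  obtain ⟨i, -, hi⟩ := Finset.exists_ne_zero_of_sum_ne_zero hd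
  have habs : |d i| = M :=
    abs_eq_of_lineBoundary_ballFactor_ne_zero hM hpos (left_ne_zero_of_mul hi)
  refine ⟨fun l => ?_, i, habs⟩
  rcases eq_or_ne l i with rfl | hl
  · exact habs.le
  · exact abs_le_of_ballFactor_ne_zero hpos
      (Finset.prod_ne_zero_iff.1 (right_ne_zero_of_mul hi) l (by simp [hl]))

theorem ballFactor_neg (i : Fin m) (x : ℤ) : ballFactor M k i (-x) = ballFactor M k i x := by
  unfold ballFactor
  split_ifs <;> simp [interval, Pi.single_apply]

theorem sphere_neg (c : Fin m → ℤ) : sphere m M k (-c) = sphere m M k c := by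
  have hflip (c : Fin m → ℤ) : signFlip 1 c = -c := by ext; simp [signFlip]
  have hball : (fun c => ball m M k (signFlip 1 c)) = ball m M k := by
    ext c
    simp only [hflip, ball_apply, Pi.neg_apply, ballFactor_neg]
  have hboundary := boundary_comp_signFlip 1 (ball m M k)
  rw [hball] at hboundary
  simpa only [hflip, sphere] using (congrFun hboundary c).symm

/-- The factors of the balls `[-M, M]ʳ × 0` and `[-M, M]ʳ⁺¹ × 0` in the directions other
than `r`, where the two balls agree. -/
def ballCofactor (M : ℤ) (r : Fin m) : CubicalChain (Fin m) :=
  ∏ i ∈ univ.erase r, fun c => ballFactor M r i (c i)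

theorem ball_eq_single_mul_ballCofactor (r : Fin m) :
    ball m M r = (fun c => Pi.single (M := fun _ => ZMod 2) 0 1 (c r)) * ballCofactor M r := by
  rw [ball, ← Finset.mul_prod_erase univ _ (Finset.mem_univ r)]
  simp [ballFactor, ballCofactor]

theorem ball_succ_eq_interval_mul_ballCofactor (r : Fin m) :
    ball m M (r + 1) = (fun c => interval M (c r)) * ballCofactor M r := by
  rw [ball, ← Finset.mul_prod_erase univ _ (Finset.mem_univ r), ballCofactor]
  congr 1
  · simp [ballFactor]
  · refine Finset.prod_congr rfl fun i hi => ?_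
    have hir : (i : ℕ) ≠ r := Fin.val_ne_iff.2 (Finset.ne_of_mem_erase hi)
    simp only [ballFactor, Order.lt_add_one_iff, hir.le_iff_lt]

theorem dependsOn_ballCofactor (r : Fin m) : DependsOn (ballCofactor M r) {r}ᶜ := by
  intro c d hcd
  simp only [ballCofactor, Finset.prod_apply]
  exact Finset.prod_congr rfl fun i hi => congrArg _ (hcd i (Finset.ne_of_mem_erase hi))

theorem eq_zero_of_ballCofactor_ne_zero {r : Fin m} {c : Fin m → ℤ} (hc : ballCofactor M r c ≠ 0)
    {l : Fin m} (hl : r < l) : c l = 0 := by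
  rw [ballCofactor, Finset.prod_apply, Finset.prod_ne_zero_iff] at hc
  have hfactor := hc l (by simp [hl.ne'])
  by_contra hne
  simp [ballFactor, Fin.val_fin_lt, hl.not_gt, hne] at hfactor

theorem eq_zero_of_boundary_ballCofactor_ne_zero {r : Fin m} {d : Fin m → ℤ}
    (hd : boundary (ballCofactor M r) d ≠ 0) {l : Fin m} (hl : r < l) : d l = 0 := by
  obtain ⟨c, hc, hface, -⟩ := exists_coface_of_boundary_ne_zero hd
  have hcl : c l = 0 := eq_zero_of_ballCofactor_ne_zero hc hl
  rw [hface l (by simp [hcl]), hcl]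

theorem boundary_comp_eval_mul_ballCofactor (a : ℤ → ZMod 2) (r : Fin m) :
    boundary ((fun c => a (c r)) * ballCofactor M r) =
      (fun d => lineBoundary a (d r)) * ballCofactor M r +
        (fun c => a (c r)) * boundary (ballCofactor M r) := by
  rw [boundary_mul_of_dependsOn (dependsOn_comp_eval a r) (dependsOn_ballCofactor r)
    disjoint_compl_right, boundary_comp_eval]

theorem hemisphere_mul_ball_succ (r : Fin m) :
    hemisphere * ball m M (r + 1) =
      (fun c => (negative * interval M) (c r)) * ballCofactor M r := by
  rw [ball_succ_eq_interval_mul_ballCofactor]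
  exact hemisphere_mul_comp_eval_mul (by simp [interval])
    fun _ hc _ => eq_zero_of_ballCofactor_ne_zero hc

theorem hemisphere_mul_sphere_succ (hM : Even M) (hpos : 0 < M) (r : Fin m) :
    hemisphere * sphere m M (r + 1) =
      (fun c => Pi.single (M := fun _ => ZMod 2) (-M) 1 (c r)) * ballCofactor M r +
        (fun c => (negative * interval M) (c r)) * boundary (ballCofactor M r) := by
  rw [sphere, ball_succ_eq_interval_mul_ballCofactor, boundary_comp_eval_mul_ballCofactor,
    mul_add, hemisphere_mul_comp_eval_mul _ fun _ hc _ => eq_zero_of_ballCofactor_ne_zero hc,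
    hemisphere_mul_comp_eval_mul (by simp [interval])
      fun _ hd _ => eq_zero_of_boundary_ballCofactor_ne_zero hd,
    negative_mul_lineBoundary_interval hM hpos]
  simp [lineBoundary_interval hM hpos, hpos.ne, hpos.ne']

theorem boundary_hemisphere_mul_ball_succ (hM : Even M) (hpos : 0 < M) (r : Fin m) :
    boundary (hemisphere * ball m M (r + 1)) =
      hemisphere * sphere m M (r + 1) + ball m M r := by
  rw [hemisphere_mul_ball_succ, boundary_comp_eval_mul_ballCofactor,
    lineBoundary_negative_mul_interval hM hpos, hemisphere_mul_sphere_succ hM hpos,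
    ball_eq_single_mul_ballCofactor, add_right_comm, ← add_mul]
  rfl

theorem boundary_hemisphere_mul_sphere (hM : Even M) (hpos : 0 < M) (hk : k ≤ m) :
    boundary (hemisphere * sphere m M k) = sphere m M (k - 1) := by
  cases k with
  | zero => simp [sphere_zero]
  | succ k =>
    have hball := boundary_hemisphere_mul_ball_succ hM hpos ⟨k, hk⟩
    have hboundary := congrArg boundary hball
    rw [boundary_boundary, map_add] at hboundary
    exact add_eq_zero_iff_eq_neg.1 hboundary.symm |>.trans (ZModModule.neg_eq_self _)

theorem boundary_ballCofactor_zero (n : ℕ) : boundary (ballCofactor M (0 : Fin (n + 1))) = 0 := by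
  ext d
  rw [ballCofactor,
    boundary_prod_of_dependsOn (p := id) fun i => dependsOn_comp_eval (ballFactor M _ i) i]
  simp [boundary_comp_eval, ballFactor, lineBoundary_single]

theorem ballCofactor_zero_apply (n : ℕ) (c : Fin (n + 1) → ℤ) :
    ballCofactor M 0 c = if ∀ i, i ≠ 0 → c i = 0 then 1 else 0 := by
  simp [ballCofactor, ballFactor, Pi.single_apply, Finset.prod_ite_zero]

theorem hemisphere_mul_sphere_one (n : ℕ) (hM : Even M) (hpos : 0 < M) :
    hemisphere * sphere (n + 1) M 1 = Pi.single (Pi.single 0 (-M)) 1 := by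
  have hsucc := hemisphere_mul_sphere_succ hM hpos (0 : Fin (n + 1))
  rw [Fin.val_zero, zero_add, boundary_ballCofactor_zero, mul_zero, add_zero] at hsucc
  ext c
  have hiff : c = Pi.single 0 (-M) ↔ c 0 = -M ∧ ∀ i, i ≠ 0 → c i = 0 := by
    simp [funext_iff, Fin.forall_fin_succ]
  rw [hsucc]
  simp only [Pi.mul_apply, Pi.single_apply, ballCofactor_zero_apply, hiff, ite_and, ite_mul,
    one_mul, zero_mul]

end Sphere

section SphereProduct

variable {κ : Type*} {n : κ → ℕ}

/-- The coordinates of the product over `ℓ` of the spaces `ℝ^(n ℓ + 1)`. -/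
abbrev Coord (n : κ → ℕ) := Σ ℓ, Fin (n ℓ + 1)

/-- The component in the factor `ℓ` of a point of the product. -/
def block {R : Type*} (c : Coord n → R) (ℓ : κ) : Fin (n ℓ + 1) → R := fun k => c ⟨ℓ, k⟩

/-- The pullback of a chain along the projection of the product to its factor `ℓ`. -/
def pullback (ℓ : κ) (z : CubicalChain (Fin (n ℓ + 1))) : CubicalChain (Coord n) :=
  fun c => z (block c ℓ)

theorem pullback_mul (ℓ : κ) (z w : CubicalChain (Fin (n ℓ + 1))) :
    pullback ℓ (z * w) = pullback ℓ z * pullback ℓ w :=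
  rfl

theorem dependsOn_pullback (ℓ : κ) (z : CubicalChain (Fin (n ℓ + 1))) :
    DependsOn (pullback ℓ z) (Sigma.fst ⁻¹' {ℓ}) :=
  fun _ _ h => congrArg z (funext fun k => h ⟨ℓ, k⟩ rfl)

variable [Fintype κ]

/-- The product over `ℓ` of the boundaries of the `k ℓ`-dimensional cubical balls. -/
def sphereProd (M : ℤ) (k : κ → ℕ) : CubicalChain (Coord n) :=
  ∏ ℓ, pullback ℓ (sphere (n ℓ + 1) M (k ℓ))

variable {M : ℤ} {k : κ → ℕ}

theorem sphereProd_apply (c : Coord n → ℤ) :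
    sphereProd M k c = ∏ ℓ, sphere (n ℓ + 1) M (k ℓ) (block c ℓ) := by
  simp [sphereProd, pullback]

theorem sphereProd_eq_zero {ℓ : κ} (hk : k ℓ = 0) : (sphereProd M k : CubicalChain (Coord n)) = 0 :=
  Finset.prod_eq_zero (Finset.mem_univ ℓ) (by rw [hk, sphere_zero]; rfl)

variable [DecidableEq κ]

theorem boundary_pullback (ℓ : κ) (z : CubicalChain (Fin (n ℓ + 1))) :
    boundary (pullback ℓ z) = pullback ℓ (boundary z) :=
  boundary_comp_of_injective (sigma_mk_injective (β := fun ℓ => Fin (n ℓ + 1))) z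

theorem boundary_pullback_sphere (ℓ : κ) (r : ℕ) :
    boundary (pullback ℓ (sphere (n ℓ + 1) M r)) = 0 := by
  rw [boundary_pullback, sphere, boundary_boundary]
  rfl

theorem boundary_prod_pullback_sphere (s : Finset κ) :
    boundary (∏ ℓ ∈ s, pullback ℓ (sphere (n ℓ + 1) M (k ℓ))) = 0 := by
  rw [boundary_prod_of_dependsOn (fun ℓ => dependsOn_pullback ℓ _)]
  exact Finset.sum_eq_zero fun ℓ _ => by rw [boundary_pullback_sphere, zero_mul]

theorem boundary_pullback_hemisphere_mul_sphereProd (hM : Even M) (hpos : 0 < M) {ℓ : κ}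
    (hk : k ℓ ≤ n ℓ + 1) :
    boundary (pullback ℓ hemisphere * sphereProd M k) =
      (sphereProd M (k - Pi.single ℓ 1) : CubicalChain (Coord n)) := by
  have hdisj : Disjoint (Sigma.fst ⁻¹' {ℓ} : Set (Coord n)) (Sigma.fst ⁻¹' (univ.erase ℓ)) :=
    Disjoint.preimage _ (by simp)
  have herase (m : κ) (hm : m ∈ univ.erase ℓ) :
      pullback m (sphere (n m + 1) M ((k - Pi.single ℓ 1 : κ → ℕ) m)) =
        pullback m (sphere (n m + 1) M (k m)) := by
    simp [Pi.single_eq_of_ne (Finset.ne_of_mem_erase hm)]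
  rw [sphereProd, sphereProd, ← Finset.mul_prod_erase univ _ (Finset.mem_univ ℓ), ← mul_assoc,
    ← pullback_mul, boundary_mul_of_dependsOn (dependsOn_pullback ℓ _)
      (dependsOn_prod (fun m => dependsOn_pullback m _) _) hdisj, boundary_prod_pullback_sphere,
    mul_zero, add_zero, boundary_pullback, boundary_hemisphere_mul_sphere hM hpos hk,
    ← Finset.mul_prod_erase univ _ (Finset.mem_univ ℓ), Finset.prod_congr rfl herase]
  simp

end SphereProduct

section CapProduct

/-- Cap product with the cochain `σ`, followed by the boundary. If `z` is a cycle, this is its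
intersection with the hypersurface that separates the regions `σ = 0` and `σ = 1`. -/
def cut {ι : Type*} [Fintype ι] [DecidableEq ι] (σ : CubicalChain ι) :
    CubicalChain ι →ₗ[ZMod 2] CubicalChain ι :=
  boundary ∘ₗ LinearMap.mulLeft (ZMod 2) σ

theorem cut_apply {ι : Type*} [Fintype ι] [DecidableEq ι] (σ z : CubicalChain ι) :
    cut σ z = boundary (σ * z) :=
  rfl

variable {κ : Type*} [Fintype κ] {n : κ → ℕ} {M : ℤ}

/-- The combination, with coefficients `χ`, of the hemispheres of the factors. The hypersurface it
cuts out represents the cohomology class `linearForm χ` of the product of projective spaces. -/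
noncomputable def hemisphereSum (χ : κ → ZMod 2) : CubicalChain (Coord n) :=
  ∑ ℓ, χ ℓ • pullback ℓ hemisphere

/-- The Poincaré dual, in the product of the spheres of dimensions `n ℓ`, of a polynomial in the
generators of the cohomology of the product of projective spaces: a monomial with exponents `a` goes
to the product of coordinate spheres of codimensions `a ℓ`, which is zero if some `a ℓ > n ℓ`. -/
noncomputable def poincareDual (M : ℤ) :
    MvPolynomial κ (ZMod 2) →ₗ[ZMod 2] CubicalChain (Coord n) :=
  (MvPolynomial.basisMonomials κ (ZMod 2)).constr (ZMod 2)
    fun a => sphereProd M fun ℓ => n ℓ + 1 - a ℓ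

theorem poincareDual_monomial (a : κ →₀ ℕ) (r : ZMod 2) :
    poincareDual M (MvPolynomial.monomial a r) =
      r • (sphereProd M fun ℓ => n ℓ + 1 - a ℓ : CubicalChain (Coord n)) := by
  have hsmul : MvPolynomial.monomial a r = r • MvPolynomial.basisMonomials κ (ZMod 2) a := by
    simp [MvPolynomial.smul_monomial]
  rw [hsmul, map_smul, poincareDual, Module.Basis.constr_basis]

theorem poincareDual_one :
    poincareDual M 1 = (sphereProd M fun ℓ => n ℓ + 1 : CubicalChain (Coord n)) := by
  simpa using poincareDual_monomial (n := n) (M := M) 0 1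

theorem poincareDual_eq_coeff_smul {p : MvPolynomial κ (ZMod 2)}
    (hp : p.IsHomogeneous (∑ ℓ, n ℓ)) :
    (poincareDual M p : CubicalChain (Coord n)) =
      p.coeff (Finsupp.equivFunOnFinite.symm n) • sphereProd M 1 := by
  set top : κ →₀ ℕ := Finsupp.equivFunOnFinite.symm n
  have hother (a : κ →₀ ℕ) (ha : a ≠ top) :
      p.coeff a • (sphereProd M fun ℓ => n ℓ + 1 - a ℓ : CubicalChain (Coord n)) = 0 := by
    by_cases hcoeff : p.coeff a = 0
    · rw [hcoeff, zero_smul]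
    have hdeg : ∑ ℓ, a ℓ = ∑ ℓ, n ℓ := by
      rw [← Finsupp.degree_eq_sum]
      exact by_contra fun hne => hcoeff (hp.coeff_eq_zero hne)
    obtain ⟨ℓ, hℓ⟩ : ∃ ℓ, n ℓ < a ℓ := by
      by_contra! hle
      exact ha (Finsupp.ext fun ℓ => (Finset.sum_eq_sum_iff_of_le fun ℓ _ => hle ℓ).1 hdeg ℓ
        (Finset.mem_univ ℓ))
    rw [sphereProd_eq_zero (ℓ := ℓ) (by omega), smul_zero]
  have htop : (fun ℓ => n ℓ + 1 - top ℓ) = 1 := by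
    ext ℓ
    simp [top]
  conv_lhs => rw [p.as_sum, map_sum]
  simp only [poincareDual_monomial]
  rw [Finset.sum_eq_single top (fun a _ => hother a)
    (fun hmem => by rw [MvPolynomial.notMem_support_iff.1 hmem, zero_smul]), htop]

variable [DecidableEq κ]

theorem poincareDual_X_mul (hM : Even M) (hpos : 0 < M) (ℓ : κ) (p : MvPolynomial κ (ZMod 2)) :
    (poincareDual M (MvPolynomial.X ℓ * p) : CubicalChain (Coord n)) =
      cut (pullback ℓ hemisphere) (poincareDual M p) := by
  induction p using MvPolynomial.induction_on' with
  | add p q hp hq => rw [mul_add, map_add, map_add, map_add, hp, hq]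
  | monomial a r =>
    have hexp : (fun m => n m + 1 - (Finsupp.single ℓ 1 + a : κ →₀ ℕ) m) =
        (fun m => n m + 1 - a m) - Pi.single ℓ 1 := by
      ext m
      simp only [Finsupp.add_apply, Finsupp.single_eq_pi_single, Pi.sub_apply]
      omega
    rw [MvPolynomial.X, MvPolynomial.monomial_mul, one_mul, poincareDual_monomial,
      poincareDual_monomial, map_smul, cut_apply, hexp,
      boundary_pullback_hemisphere_mul_sphereProd hM hpos (Nat.sub_le (n ℓ + 1) (a ℓ))]

theorem poincareDual_linearForm_mul (hM : Even M) (hpos : 0 < M) (χ : κ → ZMod 2)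
    (p : MvPolynomial κ (ZMod 2)) :
    (poincareDual M (linearForm χ * p) : CubicalChain (Coord n)) =
      cut (hemisphereSum χ) (poincareDual M p) := by
  simp only [linearForm, hemisphereSum, cut_apply, Finset.sum_mul, map_sum, smul_mul_assoc,
    map_smul, poincareDual_X_mul hM hpos]

end CapProduct

section Equivariant

variable {κ : Type*} {n : κ → ℕ}

/-- The action of `(ℤ/2)^κ` on the product, where the generator `ℓ` negates the factor `ℓ`. -/
def blockFlip {R : Type*} [Neg R] (g : κ → ZMod 2) (x : Coord n → R) : Coord n → R :=
  signFlip (g ∘ Sigma.fst) x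

/-- The product over `ℓ` of the boundaries of the cubes `[-M, M]^(n ℓ + 1)`. -/
def cubeSphereProd {R : Type*} [AddGroup R] [Lattice R] (n : κ → ℕ) (M : R) : Set (Coord n → R) :=
  {x | (∀ i, |x i| ≤ M) ∧ ∀ ℓ, ∃ k, |x ⟨ℓ, k⟩| = M}

theorem blockFlip_mem_cubeSphereProd {R : Type*} [AddCommGroup R] [LinearOrder R]
    [IsOrderedAddMonoid R] {M : R} (g : κ → ZMod 2) {x : Coord n → R}
    (hx : x ∈ cubeSphereProd n M) : blockFlip g x ∈ cubeSphereProd n M := by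
  simpa only [cubeSphereProd, Set.mem_ofPred_eq, blockFlip, abs_signFlip] using hx

theorem block_blockFlip {R : Type*} [Neg R] (g : κ → ZMod 2) (x : Coord n → R) (ℓ : κ) :
    block (blockFlip g x) ℓ = if g ℓ = 0 then block x ℓ else -block x ℓ := by
  ext k
  by_cases hg : g ℓ = 0 <;> simp [block, blockFlip, signFlip, hg]

theorem block_ne_zero {R : Type*} [AddCommGroup R] [LinearOrder R] [IsOrderedAddMonoid R] {M : R}
    (hpos : 0 < M) {x : Coord n → R} (hx : x ∈ cubeSphereProd n M) (ℓ : κ) : block x ℓ ≠ 0 := by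
  obtain ⟨k, hk⟩ := hx.2 ℓ
  intro hzero
  have hxk : x ⟨ℓ, k⟩ = 0 := congrFun hzero k
  rw [hxk, abs_zero] at hk
  exact hpos.ne hk

theorem pullback_hemisphere_blockFlip {M : ℤ} (hpos : 0 < M) {c : Coord n → ℤ}
    (hc : c ∈ cubeSphereProd n M) (g : κ → ZMod 2) (ℓ : κ) :
    pullback ℓ hemisphere (blockFlip g c) = pullback ℓ hemisphere c + g ℓ := by
  simp only [pullback, block_blockFlip]
  split_ifs with hg
  · rw [hg, add_zero]
  · have hg1 : g ℓ = 1 := Fin.eq_one_of_ne_zero _ hg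
    rw [hemisphere_neg (block_ne_zero hpos hc ℓ), hg1]

theorem boundary_support_subset_cubeSphereProd [Fintype κ] [DecidableEq κ] {M : ℤ} (hM : Even M)
    {z : CubicalChain (Coord n)} (hz : support z ⊆ cubeSphereProd n M) :
    support (boundary z) ⊆ cubeSphereProd n M := by
  intro d hd
  obtain ⟨c, hc, hface, hdist⟩ := exists_coface_of_boundary_ne_zero hd
  obtain ⟨hle, hmax⟩ := hz hc
  refine ⟨fun i => ?_, fun ℓ => ?_⟩
  · have := hle i
    have := hface i
    have := hdist i
    grind
  · obtain ⟨k, hk⟩ := hmax ℓ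
    have hck : Even (c ⟨ℓ, k⟩) := by rwa [← even_abs, hk]
    exact ⟨k, by rw [hface _ hck, hk]⟩

/-- The chains of the product of cube boundaries that are invariant under the action of `(ℤ/2)^κ`,
or equivalently the chains of the product of projective spaces. -/
def invariantChains (n : κ → ℕ) (M : ℤ) : Submodule (ZMod 2) (CubicalChain (Coord n)) where
  carrier := {z | (∀ g c, z (blockFlip g c) = z c) ∧ support z ⊆ cubeSphereProd n M}
  zero_mem' := by simp
  add_mem' {z w} hz hw := ⟨fun g c => congrArg₂ (· + ·) (hz.1 g c) (hw.1 g c),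
    (support_add z w).trans (Set.union_subset hz.2 hw.2)⟩
  smul_mem' a z hz := ⟨fun g c => congrArg (a * ·) (hz.1 g c),
    (support_const_smul_subset a z).trans hz.2⟩

variable [Fintype κ]

theorem sphereProd_mem_invariantChains {M : ℤ} (hM : Even M) (hpos : 0 < M) (k : κ → ℕ) :
    sphereProd M k ∈ invariantChains n M := by
  refine ⟨fun g c => ?_, fun c hc => ?_⟩
  · simp only [sphereProd_apply, block_blockFlip]
    refine Finset.prod_congr rfl fun ℓ _ => ?_
    split_ifs
    · rfl
    · exact sphere_neg _
  · rw [mem_support, sphereProd_apply, Finset.prod_ne_zero_iff] at hc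
    have hblock (ℓ : κ) :=
      abs_le_and_exists_abs_eq_of_sphere_ne_zero hM hpos (hc ℓ (Finset.mem_univ ℓ))
    exact ⟨fun i => (hblock i.1).1 i.2, fun ℓ => (hblock ℓ).2⟩

/-- A cochain representing the class of the hypersurface where a function changes sign, if the
function picks up the sign `(-1)^(χ ⬝ᵥ g)` under the action of `g`. -/
def IsEquivariantCochain (M : ℤ) (χ : κ → ZMod 2) (σ : CubicalChain (Coord n)) : Prop :=
  ∀ g, ∀ c ∈ cubeSphereProd n M, σ (blockFlip g c) = σ c + χ ⬝ᵥ g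

variable {M : ℤ} {χ : κ → ZMod 2} {σ σ' z w : CubicalChain (Coord n)}

theorem isEquivariantCochain_hemisphereSum (hpos : 0 < M) (χ : κ → ZMod 2) :
    IsEquivariantCochain M χ (hemisphereSum χ : CubicalChain (Coord n)) := fun g c hc => by
  simp [hemisphereSum, pullback_hemisphere_blockFlip hpos hc, mul_add, Finset.sum_add_distrib,
    dotProduct]

theorem IsEquivariantCochain.mul_comp_blockFlip (hσ : IsEquivariantCochain M χ σ)
    (hz : z ∈ invariantChains n M) (g : κ → ZMod 2) :
    (fun c => (σ * z) (blockFlip g c)) = σ * z + (χ ⬝ᵥ g) • z := by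
  ext c
  by_cases hc : z c = 0
  · simp [hz.1 g c, hc]
  · simp [hz.1 g c, hσ g c (hz.2 hc), add_mul]

theorem IsEquivariantCochain.sub_mul_mem_invariantChains (hσ : IsEquivariantCochain M χ σ)
    (hσ' : IsEquivariantCochain M χ σ') (hz : z ∈ invariantChains n M) :
    (σ - σ') * z ∈ invariantChains n M := by
  refine ⟨fun g c => ?_, (support_mul_subset_right _ z).trans hz.2⟩
  have hσz := congrFun (hσ.mul_comp_blockFlip hz g) c
  have hσz' := congrFun (hσ'.mul_comp_blockFlip hz g) c
  simp only [sub_mul, Pi.sub_apply] at *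
  rw [hσz, hσz', Pi.add_apply, Pi.add_apply, add_sub_add_right_eq_sub]

variable [DecidableEq κ]

theorem boundary_comp_blockFlip (g : κ → ZMod 2) (z : CubicalChain (Coord n)) :
    boundary (fun c => z (blockFlip g c)) = fun d => boundary z (blockFlip g d) :=
  boundary_comp_signFlip _ z

theorem boundary_mem_invariantChains (hM : Even M) (hz : z ∈ invariantChains n M) :
    boundary z ∈ invariantChains n M := by
  refine ⟨fun g c => ?_, boundary_support_subset_cubeSphereProd hM hz.2⟩
  rw [← congrFun (boundary_comp_blockFlip g z) c, funext (hz.1 g)]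

theorem IsEquivariantCochain.cut_sub_mul_boundary_mem (hM : Even M)
    (hσ : IsEquivariantCochain M χ σ) (hw : w ∈ invariantChains n M) :
    cut σ w - σ * boundary w ∈ invariantChains n M := by
  have hboundary := boundary_mem_invariantChains hM hw
  have hcut (g : κ → ZMod 2) :
      (fun c => cut σ w (blockFlip g c)) = cut σ w + (χ ⬝ᵥ g) • boundary w := by
    rw [cut_apply, ← boundary_comp_blockFlip, hσ.mul_comp_blockFlip hw g, map_add, map_smul]
  have hsupport : support (cut σ w) ⊆ cubeSphereProd n M :=
    boundary_support_subset_cubeSphereProd hM ((support_mul_subset_right σ w).trans hw.2)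
  refine ⟨fun g c => ?_, (support_sub _ _).trans (Set.union_subset hsupport
    ((support_mul_subset_right σ _).trans hboundary.2))⟩
  have hcut_apply := congrFun (hcut g) c
  have hmul_apply := congrFun (hσ.mul_comp_blockFlip hboundary g) c
  simp only [Pi.sub_apply]
  rw [hcut_apply, hmul_apply, Pi.add_apply, Pi.add_apply, add_sub_add_right_eq_sub]

theorem IsEquivariantCochain.cut_mem_invariantChains (hM : Even M)
    (hσ : IsEquivariantCochain M χ σ) (hz : z ∈ invariantChains n M) (hcycle : boundary z = 0) :
    cut σ z ∈ invariantChains n M := by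
  simpa [hcycle] using hσ.cut_sub_mul_boundary_mem hM hz

/-- The boundaries of invariant chains. Two invariant cycles are homologous, as cycles in the
product of projective spaces, if their difference is such a boundary. -/
def invariantBoundaries (n : κ → ℕ) (M : ℤ) : Submodule (ZMod 2) (CubicalChain (Coord n)) :=
  (invariantChains n M).map boundary

theorem IsEquivariantCochain.cut_sub_cut_mem_invariantBoundaries (hM : Even M)
    (hσ : IsEquivariantCochain M χ σ) (hσ' : IsEquivariantCochain M χ σ')
    {z' : CubicalChain (Coord n)} (hz' : z' ∈ invariantChains n M)
    (hzz' : z - z' ∈ invariantBoundaries n M) :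
    cut σ z - cut σ' z' ∈ invariantBoundaries n M := by
  obtain ⟨w, hw, hwz⟩ := hzz'
  have hcut : cut σ z - cut σ z' ∈ invariantBoundaries n M := by
    refine ⟨_, neg_mem (hσ.cut_sub_mul_boundary_mem hM hw), ?_⟩
    rw [neg_sub, map_sub, hwz, ← map_sub (cut σ), cut_apply σ w, boundary_boundary, sub_zero,
      cut_apply]
  have hcochain : cut σ z' - cut σ' z' ∈ invariantBoundaries n M :=
    ⟨_, hσ.sub_mul_mem_invariantChains hσ' hz', by rw [sub_mul, map_sub]; rfl⟩
  simpa using add_mem hcut hcochain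

end Equivariant

section Transfer

variable {κ : Type*} {n : κ → ℕ} {M : ℤ}

theorem blockFlip_involutive {R : Type*} [InvolutiveNeg R] (g : κ → ZMod 2) :
    Involutive (blockFlip g : (Coord n → R) → Coord n → R) := fun x => by
  ext i
  by_cases hg : g i.1 = 0 <;> simp [blockFlip, signFlip, hg]

theorem blockFlip_two_smul (g : κ → ZMod 2) (u : Coord n → ℤ) :
    blockFlip g (2 • u) = 2 • blockFlip g u := by
  ext i
  by_cases hg : g i.1 = 0 <;> simp [blockFlip, signFlip, hg]

theorem finite_cubeSphereProd [Finite κ] : (cubeSphereProd n M).Finite := by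
  cases nonempty_fintype κ
  classical
  exact (Set.finite_Icc (fun _ => -M) fun _ => M).subset fun c hc =>
    ⟨fun i => (abs_le.1 (hc.1 i)).1, fun i => (abs_le.1 (hc.1 i)).2⟩

variable [Fintype κ]

/-- The product of the hemispheres of the factors, a fundamental domain for the action of
`(ℤ/2)^κ`. -/
noncomputable def hemisphereProd : CubicalChain (Coord n) := ∏ ℓ, pullback ℓ hemisphere

theorem hemisphereProd_mul_sphereProd_one (hM : Even M) (hpos : 0 < M) (c : Coord n → ℤ) :
    hemisphereProd c * sphereProd M 1 c =
      if c = fun i => if i.2 = 0 then -M else 0 then 1 else 0 := by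
  have hblock (ℓ : κ) : hemisphere (block c ℓ) * sphere (n ℓ + 1) M 1 (block c ℓ) =
      if block c ℓ = Pi.single 0 (-M) then 1 else 0 := by
    rw [← Pi.mul_apply, hemisphere_mul_sphere_one _ hM hpos, Pi.single_apply]
  have hiff : (∀ ℓ, block c ℓ = Pi.single 0 (-M)) ↔ c = fun i => if i.2 = 0 then -M else 0 := by
    simp [funext_iff, block, Pi.single_apply, Sigma.forall]
  simp [hemisphereProd, pullback, sphereProd_apply, ← Finset.prod_mul_distrib, hblock,
    Finset.prod_ite_zero, hiff]

variable [DecidableEq κ]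

theorem sum_hemisphereProd_blockFlip (hpos : 0 < M) {c : Coord n → ℤ}
    (hc : c ∈ cubeSphereProd n M) : ∑ g, hemisphereProd (blockFlip g c) = 1 := by
  have hsum (a : ZMod 2) : ∑ b, (a + b) = 1 := by
    revert a
    decide
  simp only [hemisphereProd, Finset.prod_apply, pullback_hemisphere_blockFlip hpos hc]
  rw [← Fintype.piFinset_univ, ← Finset.prod_univ_sum (fun _ => univ)
    fun ℓ b => pullback ℓ hemisphere c + b]
  simp [hsum]

theorem finsum_hemisphereProd_mul_sum_blockFlip (hpos : 0 < M) {y : CubicalChain (Coord n)}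
    (hy : support y ⊆ cubeSphereProd n M) :
    ∑ᶠ u : Coord n → ℤ, hemisphereProd (2 • u) * ∑ g, y (blockFlip g (2 • u)) =
      ∑ᶠ u : Coord n → ℤ, y (2 • u) := by
  have hfinite : (support fun u : Coord n → ℤ => y (2 • u)).Finite :=
    (finite_cubeSphereProd.subset hy).preimage (smul_right_injective _ two_ne_zero).injOn
  have hterm (g : κ → ZMod 2) :
      (support fun u : Coord n → ℤ => hemisphereProd (blockFlip g (2 • u)) * y (2 • u)).Finite :=
    hfinite.subset (support_mul_subset_right _ _)
  have hflip (g : κ → ZMod 2) (u : Coord n → ℤ) :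
      hemisphereProd (2 • u) * y (blockFlip g (2 • u)) =
        hemisphereProd (blockFlip g (2 • blockFlip g u)) * y (2 • blockFlip g u) := by
    rw [← blockFlip_two_smul, blockFlip_involutive g]
  calc ∑ᶠ u : Coord n → ℤ, hemisphereProd (2 • u) * ∑ g, y (blockFlip g (2 • u))
      = ∑ g, ∑ᶠ u : Coord n → ℤ, hemisphereProd (2 • u) * y (blockFlip g (2 • u)) := by
        simp only [Finset.mul_sum, hflip]
        exact finsum_sum_comm _ _ fun g _ =>
          (hterm g).preimage (blockFlip_involutive g).injective.injOn
    _ = ∑ g, ∑ᶠ u : Coord n → ℤ, hemisphereProd (blockFlip g (2 • u)) * y (2 • u) := by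
        simp only [hflip]
        exact Finset.sum_congr rfl fun g _ => finsum_comp_equiv (blockFlip_involutive g).toPerm
          (f := fun u => hemisphereProd (blockFlip g (2 • u)) * y (2 • u))
    _ = ∑ᶠ u : Coord n → ℤ, (∑ g, hemisphereProd (blockFlip g (2 • u))) * y (2 • u) := by
        simp only [Finset.sum_mul]
        exact (finsum_sum_comm _ _ fun g _ => hterm g).symm
    _ = ∑ᶠ u : Coord n → ℤ, y (2 • u) := by
        refine finsum_congr fun u => ?_
        by_cases hu : y (2 • u) = 0
        · rw [hu, mul_zero]
        · rw [sum_hemisphereProd_blockFlip hpos (hy hu), one_mul]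

theorem finsum_hemisphereProd_mul_boundary_eq_zero (hM : Even M) (hpos : 0 < M)
    {w : CubicalChain (Coord n)} (hw : w ∈ invariantChains n M) :
    ∑ᶠ u : Coord n → ℤ, hemisphereProd (2 • u) * boundary w (2 • u) = 0 := by
  have hsupport : support (hemisphereProd * w) ⊆ cubeSphereProd n M :=
    (support_mul_subset_right hemisphereProd w).trans hw.2
  have htransfer :
      w = ∑ g, fun c => (hemisphereProd * w : CubicalChain (Coord n)) (blockFlip g c) := by
    ext c
    by_cases hc : w c = 0
    · simp [hw.1 _ c, hc]
    · simp [hw.1 _ c, ← Finset.sum_mul, sum_hemisphereProd_blockFlip hpos (hw.2 hc)]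
  have hboundary (c : Coord n → ℤ) :
      boundary w c = ∑ g, boundary (hemisphereProd * w) (blockFlip g c) := by
    conv_lhs => rw [htransfer, map_sum]
    simp only [boundary_comp_blockFlip, Finset.sum_apply]
  simp only [hboundary]
  rw [finsum_hemisphereProd_mul_sum_blockFlip hpos
    (boundary_support_subset_cubeSphereProd hM hsupport)]
  exact finsum_boundary_vertices_eq_zero (finite_cubeSphereProd.subset hsupport)

theorem sphereProd_one_notMem_invariantBoundaries (hM : Even M) (hpos : 0 < M) :
    sphereProd M 1 ∉ invariantBoundaries n M := by
  rintro ⟨w, hw, hwz⟩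
  have hzero := finsum_hemisphereProd_mul_boundary_eq_zero hM hpos hw
  obtain ⟨N, rfl⟩ := hM.two_dvd
  have hiff (u : Coord n → ℤ) : (2 • u = fun i : Coord n => if i.2 = 0 then -(2 * N) else 0) ↔
      u = fun i => if i.2 = 0 then -N else 0 := by
    simp only [funext_iff]
    refine forall_congr' fun i => ?_
    rw [Pi.smul_apply, nsmul_eq_mul]
    split_ifs <;> omega
  simp only [hwz, hemisphereProd_mul_sphereProd_one hM hpos, hiff] at hzero
  rw [finsum_eq_single _ _ fun u hu => if_neg hu, if_pos rfl] at hzero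
  exact one_ne_zero hzero

end Transfer

section IteratedCut

/-- The successive cuts of `z` by the cochains `σ t`, for `t` in the list `L`. -/
def iteratedCut {ι T : Type*} [Fintype ι] [DecidableEq ι] (σ : T → CubicalChain ι) (L : List T)
    (z : CubicalChain ι) : CubicalChain ι :=
  L.foldr (fun t => cut (σ t)) z

theorem boundary_iteratedCut {ι T : Type*} [Fintype ι] [DecidableEq ι] (σ : T → CubicalChain ι)
    (L : List T) {z : CubicalChain ι} (hz : boundary z = 0) :
    boundary (iteratedCut σ L z) = 0 := by
  cases L with
  | nil => exact hz
  | cons t L => exact boundary_boundary _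

theorem exists_near_of_cut_ne_zero {ι : Type*} [Fintype ι] [DecidableEq ι]
    {σ z : CubicalChain ι} (hz : boundary z = 0) {v : ι → ℤ} (hv : cut σ z v ≠ 0) (b : ZMod 2) :
    ∃ u, z u ≠ 0 ∧ σ u = b ∧ ∀ i, |u i - v i| ≤ 1 := by
  have hcut : boundary ((fun c => σ c - b + 1) * z) = cut σ z := by
    have hexpand : (fun c => σ c - b + 1) * z = σ * z + (1 - b) • z := by
      ext c
      simp only [Pi.mul_apply, Pi.add_apply, Pi.smul_apply, smul_eq_mul]
      ring
    rw [hexpand, map_add, map_smul, hz, smul_zero, add_zero, cut_apply]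
  rw [← hcut] at hv
  obtain ⟨u, hu, -, hdist⟩ := exists_coface_of_boundary_ne_zero hv
  have hone : ∀ a : ZMod 2, a + 1 ≠ 0 → a = 0 := by decide
  exact ⟨u, right_ne_zero_of_mul hu, sub_eq_zero.1 (hone _ (left_ne_zero_of_mul hu)), hdist⟩

variable {κ T : Type*} [Fintype κ] [DecidableEq κ] {n : κ → ℕ} {M : ℤ} {χ : T → κ → ZMod 2}
  {σ : T → CubicalChain (Coord n)}

theorem iteratedCut_mem_invariantChains (hM : Even M)
    (hσ : ∀ t, IsEquivariantCochain M (χ t) (σ t)) (L : List T) {z : CubicalChain (Coord n)}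
    (hz : z ∈ invariantChains n M) (hcycle : boundary z = 0) :
    iteratedCut σ L z ∈ invariantChains n M := by
  induction L with
  | nil => exact hz
  | cons t L ih => exact (hσ t).cut_mem_invariantChains hM ih (boundary_iteratedCut σ L hcycle)

theorem iteratedCut_sub_iteratedCut_mem_invariantBoundaries (hM : Even M)
    {σ' : T → CubicalChain (Coord n)} (hσ : ∀ t, IsEquivariantCochain M (χ t) (σ t))
    (hσ' : ∀ t, IsEquivariantCochain M (χ t) (σ' t)) (L : List T) {z : CubicalChain (Coord n)}
    (hz : z ∈ invariantChains n M) (hcycle : boundary z = 0) :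
    iteratedCut σ L z - iteratedCut σ' L z ∈ invariantBoundaries n M := by
  induction L with
  | nil => simp [iteratedCut]
  | cons t L ih =>
    exact (hσ t).cut_sub_cut_mem_invariantBoundaries hM (hσ' t)
      (iteratedCut_mem_invariantChains hM hσ' L hz hcycle) ih

theorem iteratedCut_hemisphereSum_poincareDual (hM : Even M) (hpos : 0 < M) (L : List T)
    (p : MvPolynomial κ (ZMod 2)) :
    (iteratedCut (fun t => hemisphereSum (χ t)) L (poincareDual M p) : CubicalChain (Coord n)) =
      poincareDual M ((L.map fun t => linearForm (χ t)).prod * p) := by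
  induction L with
  | nil => simp [iteratedCut]
  | cons t L ih =>
    rw [List.map_cons, List.prod_cons, mul_assoc, poincareDual_linearForm_mul hM hpos, ← ih]
    rfl

theorem exists_near_of_iteratedCut_ne_zero (hM : Even M)
    (hσ : ∀ t, IsEquivariantCochain M (χ t) (σ t)) {z : CubicalChain (Coord n)}
    (hz : z ∈ invariantChains n M) (hcycle : boundary z = 0) (L : List T) {v : Coord n → ℤ}
    (hv : iteratedCut σ L z v ≠ 0) {t : T} (ht : t ∈ L) (b : ZMod 2) :
    ∃ u ∈ cubeSphereProd n M, σ t u = b ∧ ∀ i, |u i - v i| ≤ L.length := by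
  induction L generalizing v with
  | nil => simp at ht
  | cons s L ih =>
    obtain ⟨u, hu, hub, hdist⟩ :=
      exists_near_of_cut_ne_zero (boundary_iteratedCut σ L hcycle) hv b
    rcases List.mem_cons.1 ht with rfl | htL
    · refine ⟨u, (iteratedCut_mem_invariantChains hM hσ L hz hcycle).2 hu, hub, fun i => ?_⟩
      exact (hdist i).trans (by simp)
    · obtain ⟨u', hu', hub', hdist'⟩ := ih hu htL
      refine ⟨u', hu', hub', fun i => ?_⟩
      calc |u' i - v i| ≤ |u' i - u i| + |u i - v i| := abs_sub_le ..
        _ ≤ L.length + 1 := add_le_add (hdist' i) (hdist i)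
        _ = (s :: L).length := by simp

theorem iteratedCut_ne_zero [Fintype T] (hM : Even M) (hpos : 0 < M)
    (hσ : ∀ t, IsEquivariantCochain M (χ t) (σ t))
    (hcoeff : (∏ t, linearForm (χ t)).coeff (Finsupp.equivFunOnFinite.symm n) ≠ 0) :
    iteratedCut σ univ.toList (sphereProd M fun ℓ => n ℓ + 1) ≠ 0 := by
  intro hzero
  have hcard : (Finsupp.equivFunOnFinite.symm n).degree = Fintype.card T := by
    by_contra hne
    exact hcoeff ((isHomogeneous_prod_linearForm χ).coeff_eq_zero hne)
  have hhomog : (∏ t, linearForm (χ t)).IsHomogeneous (∑ ℓ, n ℓ) := by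
    rw [← Finsupp.coe_equivFunOnFinite_symm n, ← Finsupp.degree_eq_sum, hcard]
    exact isHomogeneous_prod_linearForm χ
  have hcoeff_one : (∏ t, linearForm (χ t)).coeff (Finsupp.equivFunOnFinite.symm n) = 1 :=
    Fin.eq_one_of_ne_zero _ hcoeff
  have hmodel : iteratedCut (fun t => hemisphereSum (χ t)) univ.toList
      (sphereProd M fun ℓ => n ℓ + 1) = (sphereProd M 1 : CubicalChain (Coord n)) := by
    have hone := iteratedCut_hemisphereSum_poincareDual (χ := χ) (n := n) hM hpos univ.toList 1
    rw [mul_one, Finset.prod_map_toList, poincareDual_eq_coeff_smul hhomog, hcoeff_one, one_smul,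
      poincareDual_one] at hone
    exact hone
  have hmem := iteratedCut_sub_iteratedCut_mem_invariantBoundaries hM hσ
    (fun t => isEquivariantCochain_hemisphereSum hpos (χ t)) univ.toList
    (sphereProd_mem_invariantChains hM hpos fun ℓ => n ℓ + 1) (boundary_prod_pullback_sphere univ)
  rw [hzero, hmodel, zero_sub, neg_mem_iff] at hmem
  exact sphereProd_one_notMem_invariantBoundaries hM hpos hmem

end IteratedCut

section SignChange

variable {κ T : Type*} {n : κ → ℕ}

/-- The action of `(ℤ/2)^κ` on the product of the cube boundaries. -/
def cubeFlip {R : Type*} [AddCommGroup R] [LinearOrder R] [IsOrderedAddMonoid R] {M : R}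
    (g : κ → ZMod 2) (x : cubeSphereProd n M) : cubeSphereProd n M :=
  ⟨blockFlip g x.1, blockFlip_mem_cubeSphereProd g x.2⟩

variable [Fintype κ]

/-- The function `f` picks up the sign `(-1)^(χ ⬝ᵥ g)` under the action of `g`. -/
def IsSemiInvariant {R : Type*} [AddCommGroup R] [LinearOrder R] [IsOrderedAddMonoid R] {M : R}
    (χ : κ → ZMod 2) (f : cubeSphereProd n M → ℝ) : Prop :=
  ∀ g x, f (cubeFlip g x) = signChar (χ ⬝ᵥ g) * f x

variable {M : ℤ} {χ : κ → ZMod 2} {f : cubeSphereProd n M → ℝ}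

/-- The sign of `f`, written additively. Where `f` vanishes, `hemisphereSum χ` replaces the sign, so
that the cochain is equivariant whenever `f` is semi-invariant. -/
noncomputable def signCochain (χ : κ → ZMod 2) (f : cubeSphereProd n M → ℝ) :
    CubicalChain (Coord n) :=
  extend Subtype.val (fun c => if f c = 0 then hemisphereSum χ c.1 else if 0 < f c then 0 else 1) 0

theorem signCochain_apply (c : cubeSphereProd n M) :
    signCochain χ f c.1 = if f c = 0 then hemisphereSum χ c.1 else if 0 < f c then 0 else 1 :=
  Subtype.val_injective.extend_apply _ _ c

theorem nonneg_of_signCochain_eq_zero {c : cubeSphereProd n M} (hc : signCochain χ f c.1 = 0) :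
    0 ≤ f c := by
  rw [signCochain_apply] at hc
  grind

theorem nonpos_of_signCochain_eq_one {c : cubeSphereProd n M} (hc : signCochain χ f c.1 = 1) :
    f c ≤ 0 := by
  rw [signCochain_apply] at hc
  grind

theorem isEquivariantCochain_signCochain (hpos : 0 < M) (hf : IsSemiInvariant χ f) :
    IsEquivariantCochain M χ (signCochain χ f) := by
  intro g c hc
  have hflip := signCochain_apply (χ := χ) (f := f) (cubeFlip g ⟨c, hc⟩)
  rw [hf g ⟨c, hc⟩] at hflip
  simp only [cubeFlip, isEquivariantCochain_hemisphereSum hpos χ g c hc] at hflip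
  rw [hflip, signCochain_apply ⟨c, hc⟩]
  obtain hχ | hχ : χ ⬝ᵥ g = 0 ∨ χ ⬝ᵥ g = 1 :=
    (eq_or_ne _ 0).imp_right (Fin.eq_one_of_ne_zero _)
  · simp [hχ]
  · simp only [hχ, signChar_one]
    grind

variable [Fintype T] {χ : T → κ → ZMod 2}

theorem exists_near_nonneg_and_nonpos (hM : Even M) (hpos : 0 < M)
    {f : T → cubeSphereProd n M → ℝ} (hf : ∀ t, IsSemiInvariant (χ t) (f t))
    (hcoeff : (∏ t, linearForm (χ t)).coeff (Finsupp.equivFunOnFinite.symm n) ≠ 0) :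
    ∃ v : cubeSphereProd n M, ∀ t,
      (∃ u, 0 ≤ f t u ∧ ∀ i, |u.1 i - v.1 i| ≤ Fintype.card T) ∧
        ∃ u, f t u ≤ 0 ∧ ∀ i, |u.1 i - v.1 i| ≤ Fintype.card T := by
  classical
  have hσ (t : T) := isEquivariantCochain_signCochain hpos (hf t)
  have hz : sphereProd M (fun ℓ => n ℓ + 1) ∈ invariantChains n M :=
    sphereProd_mem_invariantChains hM hpos _
  have hcycle : boundary (sphereProd M fun ℓ => n ℓ + 1 : CubicalChain (Coord n)) = 0 :=
    boundary_prod_pullback_sphere univ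
  obtain ⟨v, hv⟩ := Function.ne_iff.1 (iteratedCut_ne_zero hM hpos hσ hcoeff)
  have hnear (t : T) (b : ZMod 2) : ∃ u ∈ cubeSphereProd n M,
      signCochain (χ t) (f t) u = b ∧ ∀ i, |u i - v i| ≤ Fintype.card T := by
    simpa using exists_near_of_iteratedCut_ne_zero hM hσ hz hcycle univ.toList hv
      (Finset.mem_toList.2 (Finset.mem_univ t)) b
  refine ⟨⟨v, (iteratedCut_mem_invariantChains hM hσ univ.toList hz hcycle).2 hv⟩, fun t => ?_⟩
  obtain ⟨u, hu, hzero, hdist⟩ := hnear t 0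
  obtain ⟨u', hu', hone, hdist'⟩ := hnear t 1
  exact ⟨⟨⟨u, hu⟩, nonneg_of_signCochain_eq_zero hzero, hdist⟩,
    ⟨u', hu'⟩, nonpos_of_signCochain_eq_one hone, hdist'⟩

end SignChange

section Continuous

variable {κ T : Type*} {n : κ → ℕ}

/-- Rescaling of the lattice points of the boundaries of the cubes `[-M, M]^(n ℓ + 1)`. -/
noncomputable def rescale {M : ℤ} (hpos : 0 < M) (c : cubeSphereProd n M) :
    cubeSphereProd n (1 : ℝ) where
  val i := c.1 i / M
  property := by
    have hM : (0 : ℝ) < M := Int.cast_pos.2 hpos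
    have habs (i : Coord n) : |(c.1 i / M : ℝ)| = (|c.1 i| : ℤ) / M := by
      rw [abs_div, abs_of_pos hM, Int.cast_abs]
    refine ⟨fun i => ?_, fun ℓ => ?_⟩
    · rw [habs, div_le_one hM]
      exact_mod_cast c.2.1 i
    · obtain ⟨k, hk⟩ := c.2.2 ℓ
      exact ⟨k, by rw [habs, hk, div_self hM.ne']⟩

theorem rescale_cubeFlip {M : ℤ} (hpos : 0 < M) (g : κ → ZMod 2) (c : cubeSphereProd n M) :
    rescale hpos (cubeFlip g c) = cubeFlip g (rescale hpos c) := by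
  ext i
  by_cases hg : g i.1 = 0 <;> simp [rescale, cubeFlip, blockFlip, signFlip, hg, neg_div]

theorem dist_rescale_le [Fintype κ] {M : ℤ} (hpos : 0 < M) {u v : cubeSphereProd n M} {d : ℕ}
    (huv : ∀ i, |u.1 i - v.1 i| ≤ d) : dist (rescale hpos u) (rescale hpos v) ≤ d / M := by
  have hM : (0 : ℝ) < M := Int.cast_pos.2 hpos
  refine (dist_pi_le_iff (by positivity)).2 fun i => ?_
  calc dist (u.1 i / M : ℝ) (v.1 i / M) = (|u.1 i - v.1 i| : ℤ) / M := by
        rw [Int.cast_abs, Int.cast_sub, Real.dist_eq, ← sub_div, abs_div, abs_of_pos hM]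
    _ ≤ d / M := by
        gcongr
        exact_mod_cast huv i

theorem isCompact_cubeSphereProd [Finite κ] : IsCompact (cubeSphereProd n (1 : ℝ)) := by
  have hclosed : IsClosed (cubeSphereProd n (1 : ℝ)) := by
    simp only [cubeSphereProd, Set.ofPred_and, Set.ofPred_forall, Set.ofPred_exists]
    refine (isClosed_iInter fun i => isClosed_le (by fun_prop) continuous_const).inter
      (isClosed_iInter fun ℓ => isClosed_iUnion_of_finite fun k =>
        isClosed_eq (by fun_prop) continuous_const)
  exact (isCompact_univ_pi fun _ => isCompact_Icc).of_isClosed_subset hclosed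
    fun x hx i _ => abs_le.1 (hx.1 i)

variable [Fintype κ] [Fintype T] {χ : T → κ → ZMod 2}

theorem exists_forall_abs_lt {f : T → cubeSphereProd n (1 : ℝ) → ℝ}
    (hf : ∀ t, IsSemiInvariant (χ t) (f t)) (hcont : UniformContinuous fun x t => f t x)
    (hcoeff : (∏ t, linearForm (χ t)).coeff (Finsupp.equivFunOnFinite.symm n) ≠ 0) {ε : ℝ}
    (hε : 0 < ε) : ∃ x, ∀ t, |f t x| < ε := by
  obtain ⟨δ, hδ, hclose⟩ := Metric.uniformContinuous_iff.1 hcont ε hε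
  obtain ⟨N, hN⟩ := exists_nat_gt (Fintype.card T / δ)
  set M : ℤ := 2 * (N + 1)
  have hpos : 0 < M := by positivity
  have hMδ : Fintype.card T / M < δ := by
    have hcard : Fintype.card T < N * δ := (div_lt_iff₀ hδ).1 hN
    rw [div_lt_iff₀ (Int.cast_pos.2 hpos)]
    push_cast [M]
    nlinarith
  have hnear {u v : cubeSphereProd n M} (huv : ∀ i, |u.1 i - v.1 i| ≤ Fintype.card T) (t : T) :
      |f t (rescale hpos u) - f t (rescale hpos v)| < ε :=
    (dist_le_pi_dist _ _ t).trans_lt (hclose ((dist_rescale_le hpos huv).trans_lt hMδ))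
  obtain ⟨v, hv⟩ := exists_near_nonneg_and_nonpos (even_two_mul _) hpos
    (f := fun t c => f t (rescale hpos c))
    (fun t g c => (congrArg (f t) (rescale_cubeFlip hpos g c)).trans (hf t g _)) hcoeff
  refine ⟨rescale hpos v, fun t => ?_⟩
  obtain ⟨⟨u, hu, huv⟩, u', hu', huv'⟩ := hv t
  have := abs_lt.1 (hnear huv t)
  have := abs_lt.1 (hnear huv' t)
  rw [abs_lt]
  constructor <;> linarith

theorem exists_forall_eq_zero_of_isSemiInvariant {f : T → cubeSphereProd n (1 : ℝ) → ℝ}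
    (hf : ∀ t, IsSemiInvariant (χ t) (f t)) (hcont : ∀ t, Continuous (f t))
    (hcoeff : (∏ t, linearForm (χ t)).coeff (Finsupp.equivFunOnFinite.symm n) ≠ 0) :
    ∃ x, ∀ t, f t x = 0 := by
  have : CompactSpace (cubeSphereProd n (1 : ℝ)) :=
    isCompact_iff_compactSpace.1 isCompact_cubeSphereProd
  have hcont_pi : Continuous fun x t => f t x := continuous_pi hcont
  have hclosure : 0 ∈ closure (Set.range fun x t => f t x) := by
    refine Metric.mem_closure_range_iff.2 fun ε hε => ?_
    obtain ⟨x, hx⟩ := exists_forall_abs_lt hf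
      (CompactSpace.uniformContinuous_of_continuous hcont_pi) hcoeff hε
    exact ⟨x, (dist_pi_lt_iff hε).2 fun t => by simpa using hx t⟩
  obtain ⟨x, hx⟩ := (isCompact_range hcont_pi).isClosed.closure_subset hclosure
  exact ⟨x, congrFun hx⟩

end Continuous

end CubicalChain

open CubicalChain

section RadialProjection

variable {κ T : Type*} {n : κ → ℕ}

/-- The product over `ℓ` of the unit spheres of the Euclidean spaces `ℝ^(n ℓ + 1)`. -/
abbrev UnitSphereProd (n : κ → ℕ) : Type _ :=
  {y : ∀ ℓ, EuclideanSpace ℝ (Fin (n ℓ + 1)) // ∀ ℓ, ‖y ℓ‖ = 1}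

theorem toLp_block_ne_zero (x : cubeSphereProd n (1 : ℝ)) (ℓ : κ) :
    WithLp.toLp 2 (block x.1 ℓ) ≠ 0 := by
  simpa using block_ne_zero one_pos x.2 ℓ

/-- The radial projection of the boundaries of the cubes `[-1, 1]^(n ℓ + 1)` to the unit spheres. -/
noncomputable def radialProjection (x : cubeSphereProd n (1 : ℝ)) : UnitSphereProd n :=
  ⟨fun ℓ => NormedSpace.normalize (WithLp.toLp 2 (block x.1 ℓ)),
    fun ℓ => NormedSpace.norm_normalize_eq_one_iff.2 (toLp_block_ne_zero x ℓ)⟩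

theorem continuous_radialProjection :
    Continuous (radialProjection : cubeSphereProd n (1 : ℝ) → UnitSphereProd n) := by
  refine Continuous.subtype_mk (continuous_pi fun ℓ => ?_) _
  have hblock : Continuous fun x : cubeSphereProd n (1 : ℝ) => WithLp.toLp 2 (block x.1 ℓ) := by
    have : Continuous fun x : cubeSphereProd n (1 : ℝ) => block x.1 ℓ :=
      continuous_pi fun k => (continuous_apply _).comp continuous_subtype_val
    exact (PiLp.continuous_toLp 2 _).comp this
  exact (hblock.norm.inv₀ fun x => norm_ne_zero_iff.2 (toLp_block_ne_zero x ℓ)).smul hblock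

theorem radialProjection_cubeFlip (g : κ → ZMod 2) (x : cubeSphereProd n (1 : ℝ)) (ℓ : κ) :
    (radialProjection (cubeFlip g x)).1 ℓ =
      if g ℓ = 0 then (radialProjection x).1 ℓ else -(radialProjection x).1 ℓ := by
  simp only [radialProjection, cubeFlip, block_blockFlip]
  split_ifs
  · rfl
  · rw [WithLp.toLp_neg, NormedSpace.normalize_neg]

theorem exists_forall_eq_zero_of_coeff_ne_zero [Fintype κ] [Fintype T] {χ : T → κ → ZMod 2}
    {f : T → UnitSphereProd n → ℝ} (hcont : ∀ t, Continuous (f t))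
    (hequiv : ∀ t g y z, (∀ ℓ, z.1 ℓ = if g ℓ = 0 then y.1 ℓ else -(y.1 ℓ)) →
      f t z = signChar (χ t ⬝ᵥ g) * f t y)
    (hcoeff : (∏ t, linearForm (χ t)).coeff (Finsupp.equivFunOnFinite.symm n) ≠ 0) :
    ∃ y, ∀ t, f t y = 0 := by
  obtain ⟨x, hx⟩ := exists_forall_eq_zero_of_isSemiInvariant
    (f := fun t x => f t (radialProjection x))
    (fun t g x => hequiv t g _ _ (radialProjection_cubeFlip g x))
    (fun t => (hcont t).comp continuous_radialProjection) hcoeff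
  exact ⟨radialProjection x, hx⟩

end RadialProjection

/-- Every continuous `(ℤ/2)ˢ`-equivariant map `Φ : Y → U_s^{⊕j}` has a zero. Here the
generator `ω_ℓ` of `G = (ℤ/2)ˢ` acts on `Y` by `p_ℓ ↦ −p_ℓ`,
`U_s = {(y_α)_{α ∈ (ℤ/2)ˢ} : ∑_α y_α = 0} ⊆ ℝ^{(ℤ/2)ˢ}` carries the index-shift action
`(β·y)_α = y_{β+α}`, and `U_s^{⊕j}` the diagonal `G`-action. Equivariance is expressed
pointwise: whenever `z` is obtained from `y` by negating exactly the coordinates `ℓ` with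
`g ℓ ≠ 0`, then `Φ z = g • Φ y`. -/
theorem equivariant_map_has_zero (s j : ℕ) (hs : 1 ≤ s) (hj : 1 ≤ j)
    (Φ : SphereProd s j → (Fin j → (Fin s → ZMod 2) → ℝ))
    (hcont : Continuous Φ)
    (hsum : ∀ y i, ∑ α, Φ y i α = 0)
    (hequiv : ∀ (g : Fin s → ZMod 2) (y z : SphereProd s j),
      (∀ ℓ, z.1 ℓ = if g ℓ = 0 then y.1 ℓ else -(y.1 ℓ)) →
      Φ z = fun i α => Φ y i (g + α)) :
    ∃ y : SphereProd s j, Φ y = 0 := by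
  obtain ⟨y, hy⟩ := exists_forall_eq_zero_of_coeff_ne_zero
    (n := fun ℓ : Fin s => j * 2 ^ (ℓ : ℕ)) (T := Σ ℓ : Fin s, Fin j × lastNonzeroAt ℓ)
    (χ := fun t => t.2.2.1) (f := fun t y => walsh (Φ y t.2.1) t.2.2.1)
    (fun t => continuous_walsh (continuous_pi_iff.1 hcont t.2.1) t.2.2.1)
    (fun t g y z hyz => by rw [hequiv g y z hyz, walsh_translate])
    (by rw [coeff_prod_linearForm_lastNonzeroAt]; exact one_ne_zero)
  refine ⟨y, funext fun i => eq_zero_of_walsh_eq_zero fun χ => ?_⟩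
  rcases eq_or_ne χ 0 with rfl | hχ
  · rw [walsh_zero, hsum]
  · obtain ⟨ℓ, hℓ, hlast⟩ := exists_last_ne_zero hχ
    have hone : χ ℓ = 1 := Fin.eq_one_of_ne_zero _ hℓ
    exact hy ⟨ℓ, i, χ, mem_lastNonzeroAt.2 ⟨hone, hlast⟩⟩
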